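/- Let h be a finite-dimensional Lie bialgebra with double D(h) = h ⊕ h*_{op}, with dual bases {h^i} ⊂ h and {η^i} ⊂ h*_{op}, canonical r-matrix r = Σ_i η^i ∧ h^i and canonical invariant element θ = ½ Σ_i (η^i ⊗ h^i + h^i ⊗ η^i). Let L be a manifold with a D(h)-action on functions such that θ induces the zero bidifferential operator on A(L) (a Poisson base manifold). Then the bivector field ϖ := Σ_i η⃗^i ∧ h⃗^i on L equals Σ_i η⃗^i ⊗ h⃗^i and defines a Poisson bracket on L, which moreover makes L a Poisson–Lie D(h)-manifold. -/

import Mathlib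

/-!
STATEMENT 15: Let `h` be a finite-dimensional Lie bialgebra with double
`D = D(h) = h ⊕ h*_{op}`, with dual bases `{h^i} ⊂ h`, `{η^i} ⊂ h*_{op}`, canonical
r-matrix `r = Σ η^i ∧ h^i` and canonical invariant element
`θ = ½ Σ (η^i ⊗ h^i + h^i ⊗ η^i)`.  Let `L` be a Poisson base manifold over `h`:
`D` acts on the (commutative) function algebra `A = A(L)` by derivations and `θ`
induces the zero bidifferential operator.  Then the bivector `ϖ = Σ η⃗^i ∧ h⃗^i`
equals `Σ η⃗^i ⊗ h⃗^i`, defines a Poisson bracket on `L`, and makes `L` a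
Poisson–Lie `D(h)`-manifold (the cocycle condition with respect to the cobracket
`μ(x) = ad_x r` holds).
-/

open TensorProduct

noncomputable section

/-!
Write `E = Σ η^i ⊗ h^i` and let `τ` be the flip, so that `r = ½ (E - τ E)` and `θ = ½ (E + τ E)`.
Since `E = r + θ` and `θ` acts by zero, `E` and `r` induce the same bidifferential operator, and it
is antisymmetric because `τ r = -r`. The Leibniz rule and the cocycle identity hold for the operator
of every 2-tensor. The Jacobiator is the tridifferential operator of `[[r, r]] = [θ₁₂, θ₂₃]`, and
the latter acts by zero: once the commutator is expanded, each of its two terms contains the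
operator of `θ` applied to a pair of functions.
-/

section Operators

variable {R M A : Type*} [CommRing R] [AddCommGroup M] [Module R M] [CommRing A] [Algebra R A]
  (φ : M →ₗ[R] Derivation R A A)

/-- The bidifferential operator `a, b ↦ Σ (x⃗ a) (y⃗ b)` induced by a 2-tensor `Σ x ⊗ y` when the
elements of `M` act on the algebra `A` by derivations. -/
def bidiffOp : M ⊗[R] M →ₗ[R] A →ₗ[R] A →ₗ[R] A :=
  TensorProduct.lift <| LinearMap.mk₂ R
    (fun x y ↦ (LinearMap.mul R A).compl₁₂ (φ x : A →ₗ[R] A) (φ y : A →ₗ[R] A))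
    (fun _ _ _ ↦ by ext; simp) (fun _ _ _ ↦ by ext; simp)
    (fun _ _ _ ↦ by ext; simp [mul_add]) (fun _ _ _ ↦ by ext; simp)

/-- The tridifferential operator `a, b, c ↦ Σ (x⃗ a) (y⃗ b) (z⃗ c)` induced by a 3-tensor
`Σ (x ⊗ y) ⊗ z`. -/
def tridiffOp : (M ⊗[R] M) ⊗[R] M →ₗ[R] A →ₗ[R] A →ₗ[R] A →ₗ[R] A :=
  TensorProduct.lift <| LinearMap.mk₂ R
    (fun t z ↦ (bidiffOp φ t).compr₂ ((LinearMap.mul R A).compl₂ (φ z : A →ₗ[R] A)))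
    (fun _ _ _ ↦ by ext; simp) (fun _ _ _ ↦ by ext; simp)
    (fun _ _ _ ↦ by ext; simp [mul_add]) (fun _ _ _ ↦ by ext; simp)

@[simp]
theorem bidiffOp_tmul (x y : M) (a b : A) : bidiffOp φ (x ⊗ₜ[R] y) a b = φ x a * φ y b := rfl

@[simp]
theorem tridiffOp_tmul (x y z : M) (a b c : A) :
    tridiffOp φ ((x ⊗ₜ[R] y) ⊗ₜ[R] z) a b c = φ x a * φ y b * φ z c := rfl

theorem bidiffOp_sum_tmul {ι : Type*} (s : Finset ι) (x y : ι → M) (a b : A) :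
    bidiffOp φ (∑ i ∈ s, x i ⊗ₜ[R] y i) a b = ∑ i ∈ s, φ (x i) a * φ (y i) b := by
  simp only [map_sum, LinearMap.sum_apply, bidiffOp_tmul]

theorem bidiffOp_comm (t : M ⊗[R] M) (a b : A) :
    bidiffOp φ (TensorProduct.comm R M M t) a b = bidiffOp φ t b a := by
  induction t with
  | zero => simp
  | add s t hs ht => simp [hs, ht]
  | tmul x y => simp [mul_comm]

theorem bidiffOp_antisymm {r : M ⊗[R] M} (hr : TensorProduct.comm R M M r = -r) (a b : A) :
    bidiffOp φ r a b = -bidiffOp φ r b a := by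
  simp only [← bidiffOp_comm φ r b a, hr, map_neg, LinearMap.neg_apply]

theorem bidiffOp_mul_left (t : M ⊗[R] M) (a b c : A) :
    bidiffOp φ t (a * b) c = a * bidiffOp φ t b c + b * bidiffOp φ t a c := by
  induction t with
  | zero => simp
  | add s t hs ht =>
    simp only [map_add, LinearMap.add_apply, hs, ht]
    ring
  | tmul x y =>
    simp only [bidiffOp_tmul, Derivation.leibniz, smul_eq_mul]
    ring

theorem bidiffOp_sum_tmul_nested_right {ι : Type*} (s : Finset ι) (x y : ι → M) (a b c : A) :
    bidiffOp φ (∑ i ∈ s, x i ⊗ₜ[R] y i) a (bidiffOp φ (∑ i ∈ s, x i ⊗ₜ[R] y i) b c) =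
      ∑ i ∈ s, ∑ j ∈ s, (φ (x i) a * φ (y i) (φ (x j) b) * φ (y j) c
        + φ (x i) a * φ (x j) b * φ (y i) (φ (y j) c)) := by
  rw [bidiffOp_sum_tmul, bidiffOp_sum_tmul]
  simp only [map_sum, Derivation.leibniz, smul_eq_mul, Finset.mul_sum]
  exact Finset.sum_congr rfl fun i _ ↦ Finset.sum_congr rfl fun j _ ↦ by ring

theorem bidiffOp_sum_tmul_nested_left {ι : Type*} (s : Finset ι) (x y : ι → M) (a b c : A) :
    bidiffOp φ (∑ i ∈ s, x i ⊗ₜ[R] y i) (bidiffOp φ (∑ i ∈ s, x i ⊗ₜ[R] y i) a b) c =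
      ∑ i ∈ s, ∑ j ∈ s, (φ (x j) (φ (x i) a) * φ (y i) b * φ (y j) c
        + φ (x i) a * φ (x j) (φ (y i) b) * φ (y j) c) := by
  rw [bidiffOp_sum_tmul, bidiffOp_sum_tmul]
  simp only [map_sum, Derivation.leibniz, smul_eq_mul, Finset.sum_mul]
  rw [Finset.sum_comm]
  exact Finset.sum_congr rfl fun i _ ↦ Finset.sum_congr rfl fun j _ ↦ by ring

theorem comm_half_sub_comm [Invertible (2 : R)] (E : M ⊗[R] M) :
    TensorProduct.comm R M M ((⅟2 : R) • (E - TensorProduct.comm R M M E)) =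
      -((⅟2 : R) • (E - TensorProduct.comm R M M E)) := by
  rw [map_smul, map_sub, TensorProduct.comm_comm, ← smul_neg, neg_sub]

theorem bidiffOp_half_sub_comm [Invertible (2 : R)] {E : M ⊗[R] M}
    (hE : ∀ a b : A, bidiffOp φ ((⅟2 : R) • (E + TensorProduct.comm R M M E)) a b = 0) (a b : A) :
    bidiffOp φ ((⅟2 : R) • (E - TensorProduct.comm R M M E)) a b = bidiffOp φ E a b := by
  have E_eq : E = (⅟2 : R) • (E - TensorProduct.comm R M M E) +
      (⅟2 : R) • (E + TensorProduct.comm R M M E) := by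
    rw [← smul_add, sub_add_add_cancel, smul_add, invOf_two_smul_add_invOf_two_smul]
  conv_rhs => rw [E_eq, map_add, LinearMap.add_apply, LinearMap.add_apply, hE, add_zero]

end Operators

section YangBaxter

variable (R L : Type*) [CommRing R] [LieRing L] [LieAlgebra R L]

/-- The bracket `s ⊗ t ↦ [s₁₂, t₁₃]`, where the subscripts are the positions in the triple tensor
product that the two factors of a 2-tensor occupy. -/
def lie₁₂₁₃ : (L ⊗[R] L) ⊗[R] (L ⊗[R] L) →ₗ[R] (L ⊗[R] L) ⊗[R] L :=
  (TensorProduct.assoc R L L L).symm.toLinearMap ∘ₗ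
    TensorProduct.map (LieModule.toModuleHom R L L : L ⊗[R] L →ₗ[R] L) LinearMap.id ∘ₗ
      (TensorProduct.tensorTensorTensorComm R L L L L).toLinearMap

/-- The bracket `s ⊗ t ↦ [s₁₂, t₂₃]`, with subscripts as in `lie₁₂₁₃`. -/
def lie₁₂₂₃ : (L ⊗[R] L) ⊗[R] (L ⊗[R] L) →ₗ[R] (L ⊗[R] L) ⊗[R] L :=
  TensorProduct.map
      (TensorProduct.map LinearMap.id (LieModule.toModuleHom R L L : L ⊗[R] L →ₗ[R] L))
      LinearMap.id ∘ₗ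
    (TensorProduct.tensorTensorTensorAssoc R L L L L).toLinearMap

/-- The bracket `s ⊗ t ↦ [s₁₃, t₂₃]`, with subscripts as in `lie₁₂₁₃`. -/
def lie₁₃₂₃ : (L ⊗[R] L) ⊗[R] (L ⊗[R] L) →ₗ[R] (L ⊗[R] L) ⊗[R] L :=
  TensorProduct.map LinearMap.id (LieModule.toModuleHom R L L : L ⊗[R] L →ₗ[R] L) ∘ₗ
    (TensorProduct.tensorTensorTensorComm R L L L L).toLinearMap

variable {R L}

/-- The left-hand side `[[r, r]] = [r₁₂, r₁₃] + [r₁₂, r₂₃] + [r₁₃, r₂₃]` of the classical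
Yang–Baxter equation. -/
def schoutenBracket (r : L ⊗[R] L) : (L ⊗[R] L) ⊗[R] L :=
  lie₁₂₁₃ R L (r ⊗ₜ r) + lie₁₂₂₃ R L (r ⊗ₜ r) + lie₁₃₂₃ R L (r ⊗ₜ r)

@[simp]
theorem lie₁₂₁₃_tmul (x y z w : L) :
    lie₁₂₁₃ R L ((x ⊗ₜ y) ⊗ₜ (z ⊗ₜ w)) = (⁅x, z⁆ ⊗ₜ y) ⊗ₜ w := by
  simp [lie₁₂₁₃]

@[simp]
theorem lie₁₂₂₃_tmul (x y z w : L) :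
    lie₁₂₂₃ R L ((x ⊗ₜ y) ⊗ₜ (z ⊗ₜ w)) = (x ⊗ₜ ⁅y, z⁆) ⊗ₜ w := by
  simp [lie₁₂₂₃]

@[simp]
theorem lie₁₃₂₃_tmul (x y z w : L) :
    lie₁₃₂₃ R L ((x ⊗ₜ y) ⊗ₜ (z ⊗ₜ w)) = (x ⊗ₜ z) ⊗ₜ ⁅y, w⁆ := by
  simp [lie₁₃₂₃]

theorem lie₁₂₂₃_sum_tmul {ι : Type*} [Fintype ι] (x y : ι → L) :
    lie₁₂₂₃ R L ((∑ i, x i ⊗ₜ y i) ⊗ₜ (∑ j, x j ⊗ₜ y j)) =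
      ∑ i, ∑ j, (x i ⊗ₜ ⁅y i, x j⁆) ⊗ₜ y j := by
  rw [Finset.sum_comm]
  simp only [TensorProduct.sum_tmul, TensorProduct.tmul_sum, map_sum, lie₁₂₂₃_tmul]

theorem schoutenBracket_sum_tmul {ι : Type*} [Fintype ι] (x y : ι → L) :
    schoutenBracket (∑ i, x i ⊗ₜ[R] y i) =
      ∑ i, ∑ j, ((⁅x i, x j⁆ ⊗ₜ y i) ⊗ₜ y j + (x i ⊗ₜ ⁅y i, x j⁆) ⊗ₜ y j
        + (x i ⊗ₜ x j) ⊗ₜ ⁅y i, y j⁆) := by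
  rw [Finset.sum_comm]
  simp only [schoutenBracket, TensorProduct.sum_tmul, TensorProduct.tmul_sum, map_sum,
    lie₁₂₁₃_tmul, lie₁₂₂₃_tmul, lie₁₃₂₃_tmul, Finset.sum_add_distrib]

end YangBaxter

section LieAction

variable {R L A : Type*} [CommRing R] [LieRing L] [LieAlgebra R L] [CommRing A] [Algebra R A]
  (φ : L →ₗ⁅R⁆ Derivation R A A)

theorem bidiffOp_lie (x : L) (t : L ⊗[R] L) (a b : A) :
    bidiffOp φ ⁅x, t⁆ a b =
      φ x (bidiffOp φ t a b) - bidiffOp φ t (φ x a) b - bidiffOp φ t a (φ x b) := by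
  induction t with
  | zero => simp
  | add s t hs ht =>
    simp only [lie_add, map_add, LinearMap.add_apply, hs, ht]
    ring
  | tmul y z =>
    simp only [TensorProduct.LieModule.lie_tmul_right, map_add, LinearMap.add_apply, bidiffOp_tmul,
      LieHom.coe_toLinearMap, LieHom.map_lie, Derivation.commutator_apply, Derivation.leibniz,
      smul_eq_mul]
    ring

theorem tridiffOp_lie₁₂₂₃_eq_zero {θ : L ⊗[R] L} (hθ : ∀ a b : A, bidiffOp φ θ a b = 0)
    (a b c : A) :
    tridiffOp φ (lie₁₂₂₃ R L (θ ⊗ₜ θ)) a b c = 0 := by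
  obtain ⟨k, x, y, rfl⟩ := TensorProduct.exists_sum_tmul_eq θ
  simp only [bidiffOp_sum_tmul, LieHom.coe_toLinearMap] at hθ
  have left_copy_vanishes : ∑ i, ∑ j, φ (x i) a * φ (y i) (φ (x j) b) * φ (y j) c = 0 := by
    rw [Finset.sum_comm]
    simp only [← Finset.sum_mul, hθ, zero_mul, Finset.sum_const_zero]
  have right_copy_vanishes : ∑ i, ∑ j, φ (x i) a * φ (x j) (φ (y i) b) * φ (y j) c = 0 := by
    simp only [mul_assoc, ← Finset.mul_sum, hθ, mul_zero, Finset.sum_const_zero]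
  simp only [lie₁₂₂₃_sum_tmul, map_sum, LinearMap.sum_apply, tridiffOp_tmul,
    LieHom.coe_toLinearMap, LieHom.map_lie, Derivation.commutator_apply, mul_sub, sub_mul,
    Finset.sum_sub_distrib, left_copy_vanishes, right_copy_vanishes, sub_zero]

theorem tridiffOp_schoutenBracket {r : L ⊗[R] L} (hr : TensorProduct.comm R L L r = -r)
    (a b c : A) :
    tridiffOp φ (schoutenBracket r) a b c =
      bidiffOp φ r a (bidiffOp φ r b c) - bidiffOp φ r (bidiffOp φ r a b) c
        - bidiffOp φ r b (bidiffOp φ r a c) := by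
  have antisymm := bidiffOp_antisymm (φ : L →ₗ[R] Derivation R A A) hr
  obtain ⟨k, x, y, rfl⟩ := TensorProduct.exists_sum_tmul_eq r
  simp only [bidiffOp_sum_tmul, LieHom.coe_toLinearMap] at antisymm
  -- These second-order terms are the only ones matched through the antisymmetry of `r`.
  have cross : ∑ i, ∑ j, φ (x i) (φ (x j) a) * φ (y i) b * φ (y j) c =
      -∑ i, ∑ j, φ (x i) b * φ (y i) (φ (x j) a) * φ (y j) c := by
    rw [Finset.sum_comm, Finset.sum_comm (f := fun i j ↦ φ (x i) b * _ * φ (y j) c)]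
    simp only [← Finset.sum_mul, antisymm _ b, neg_mul, Finset.sum_neg_distrib]
  have swapped : ∑ i, ∑ j, φ (x i) b * φ (x j) a * φ (y i) (φ (y j) c) =
      ∑ i, ∑ j, φ (x i) a * φ (x j) b * φ (y j) (φ (y i) c) := by
    rw [Finset.sum_comm]
    simp only [mul_comm (φ (x _) b)]
  rw [bidiffOp_sum_tmul_nested_right, bidiffOp_sum_tmul_nested_left,
    bidiffOp_sum_tmul_nested_right]
  simp only [schoutenBracket_sum_tmul, map_sum, map_add, LinearMap.sum_apply, LinearMap.add_apply,
    tridiffOp_tmul, LieHom.coe_toLinearMap, LieHom.map_lie, Derivation.commutator_apply, mul_sub,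
    sub_mul, Finset.sum_add_distrib, Finset.sum_sub_distrib, swapped, cross]
  ring

theorem bidiffOp_jacobi {r θ : L ⊗[R] L} (hr : TensorProduct.comm R L L r = -r)
    (hYB : schoutenBracket r = lie₁₂₂₃ R L (θ ⊗ₜ θ)) (hθ : ∀ a b : A, bidiffOp φ θ a b = 0)
    (a b c : A) :
    bidiffOp φ r a (bidiffOp φ r b c) + bidiffOp φ r b (bidiffOp φ r c a)
      + bidiffOp φ r c (bidiffOp φ r a b) = 0 := by
  have leibniz_form := tridiffOp_schoutenBracket φ hr a b c
  rw [hYB, tridiffOp_lie₁₂₂₃_eq_zero φ hθ] at leibniz_form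
  rw [bidiffOp_antisymm _ hr c a, bidiffOp_antisymm _ hr c, map_neg]
  linear_combination -leibniz_form

theorem exists_derivation_lieHom_apply_eq (ρ : L →ₗ[R] Module.End R A)
    (hder : ∀ (x : L) (a b : A), ρ x (a * b) = a * ρ x b + b * ρ x a)
    (hlie : ∀ x y : L, ρ ⁅x, y⁆ = ρ x ∘ₗ ρ y - ρ y ∘ₗ ρ x) :
    ∃ φ : L →ₗ⁅R⁆ Derivation R A A, ∀ x a, φ x a = ρ x a :=
  ⟨{ toFun x := Derivation.mk' (ρ x) (hder x)
     map_add' _ _ := by ext; simp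
     map_smul' _ _ := by ext; simp
     map_lie' := by intros; ext; simp [hlie, Derivation.commutator_apply] }, fun _ _ ↦ rfl⟩

end LieAction

theorem statement15_general {R D A ι κ κ' : Type*} [CommRing R] [Invertible (2 : R)]
    [LieRing D] [LieAlgebra R D] [CommRing A] [Algebra R A] [Fintype ι] [Fintype κ] [Fintype κ']
    (hb eb : ι → D) (ρ : D →ₗ[R] Module.End R A)
    (hder : ∀ (x : D) (a b : A), ρ x (a * b) = a * ρ x b + b * ρ x a)
    (hlie : ∀ x y : D, ρ ⁅x, y⁆ = ρ x ∘ₗ ρ y - ρ y ∘ₗ ρ x)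
    (ra rb : κ → D) (θa θb : κ' → D)
    (hrdef : ∑ i, ra i ⊗ₜ[R] rb i = (⅟2 : R) • ∑ i, (eb i ⊗ₜ[R] hb i - hb i ⊗ₜ[R] eb i))
    (hθdef : ∑ i, θa i ⊗ₜ[R] θb i = (⅟2 : R) • ∑ i, (eb i ⊗ₜ[R] hb i + hb i ⊗ₜ[R] eb i))
    (hMYBE : ∑ i, ∑ j, ((⁅ra i, ra j⁆ ⊗ₜ[R] rb i) ⊗ₜ[R] rb j
          + (ra i ⊗ₜ[R] ⁅rb i, ra j⁆) ⊗ₜ[R] rb j + (ra i ⊗ₜ[R] ra j) ⊗ₜ[R] ⁅rb i, rb j⁆)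
      = ∑ i, ∑ j, (θa i ⊗ₜ[R] ⁅θb i, θa j⁆) ⊗ₜ[R] θb j)
    (hθzero : ∀ a b : A, ∑ i, ρ (θa i) a * ρ (θb i) b = 0)
    (pb : A → A → A) (hpb : ∀ a b : A, pb a b = ∑ i, ρ (eb i) a * ρ (hb i) b) :
    (∀ a b : A,
      (⅟2 : R) • ∑ i, (ρ (eb i) a * ρ (hb i) b - ρ (hb i) a * ρ (eb i) b) = pb a b) ∧
    (∀ a b : A, pb a b = -pb b a) ∧
    (∀ a b c : A, pb (a * b) c = a * pb b c + b * pb a c) ∧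
    (∀ a b c : A, pb a (pb b c) + pb b (pb c a) + pb c (pb a b) = 0) ∧
    (∀ (x : D) (a b : A), ρ x (pb a b) - pb (ρ x a) b - pb a (ρ x b) =
      ∑ i, (ρ ⁅x, ra i⁆ a * ρ (rb i) b + ρ (ra i) a * ρ ⁅x, rb i⁆ b)) := by
  obtain ⟨φ, hφ⟩ := exists_derivation_lieHom_apply_eq ρ hder hlie
  simp only [← hφ] at hθzero hpb ⊢
  set r : D ⊗[R] D := ∑ i, ra i ⊗ₜ[R] rb i
  set θ : D ⊗[R] D := ∑ i, θa i ⊗ₜ[R] θb i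
  let E : D ⊗[R] D := ∑ i, eb i ⊗ₜ[R] hb i
  have comm_E : TensorProduct.comm R D D E = ∑ i, hb i ⊗ₜ[R] eb i := by simp [E]
  rw [Finset.sum_sub_distrib, ← comm_E] at hrdef
  rw [Finset.sum_add_distrib, ← comm_E] at hθdef
  have hr : TensorProduct.comm R D D r = -r := by rw [hrdef, comm_half_sub_comm]
  have hθ (a b : A) : bidiffOp φ θ a b = 0 := by simpa [θ] using hθzero a b
  have hYB : schoutenBracket r = lie₁₂₂₃ R D (θ ⊗ₜ θ) := by
    rw [schoutenBracket_sum_tmul, lie₁₂₂₃_sum_tmul, hMYBE]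
  have pb_eq (a b : A) : pb a b = bidiffOp φ r a b := by
    rw [hrdef, bidiffOp_half_sub_comm _ (by rwa [← hθdef])]
    simp [hpb]
  simp only [pb_eq]
  refine ⟨fun a b ↦ ?_, bidiffOp_antisymm _ hr, bidiffOp_mul_left _ r,
    bidiffOp_jacobi φ hr hYB hθ, fun x a b ↦ ?_⟩
  · simp [hrdef, comm_E, E]
  · rw [← bidiffOp_lie φ x r a b]
    simp [r, TensorProduct.LieModule.lie_tmul_right, lie_sum]

theorem statement15
    -- the double `D = D(h)` of a finite-dimensional Lie bialgebra `h`: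
    (D : Type*) [LieRing D] [LieAlgebra ℂ D] [FiniteDimensional ℂ D]
    (n : ℕ) (hb eb : Fin n → D)  -- the dual bases `{h^i}` and `{η^i}`
    -- the function algebra `A = A(L)` with the `D`-action by derivations:
    (A : Type*) [CommRing A] [Algebra ℂ A]
    (ρ : D →ₗ[ℂ] Module.End ℂ A)
    (hder : ∀ (x : D) (a b : A), ρ x (a * b) = a * ρ x b + b * ρ x a)
    (hlie : ∀ x y : D, ρ ⁅x, y⁆ = ρ x ∘ₗ ρ y - ρ y ∘ₗ ρ x)
    -- decompositions of the r-matrix `r = Σ η^i ∧ h^i` and of `θ` into components: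
    (m : ℕ) (ra rb θa θb : Fin m → D)
    (hrdef : ∑ i, (ra i) ⊗ₜ[ℂ] (rb i)
      = (2⁻¹ : ℂ) • ∑ i, ((eb i) ⊗ₜ[ℂ] (hb i) - (hb i) ⊗ₜ[ℂ] (eb i)))
    (hθdef : ∑ i, (θa i) ⊗ₜ[ℂ] (θb i)
      = (2⁻¹ : ℂ) • ∑ i, ((eb i) ⊗ₜ[ℂ] (hb i) + (hb i) ⊗ₜ[ℂ] (eb i)))
    -- `θ` is ad-invariant:
    (hθinv : ∀ x : D,
      ∑ i, (⁅x, θa i⁆ ⊗ₜ[ℂ] (θb i) + (θa i) ⊗ₜ[ℂ] ⁅x, θb i⁆) = (0 : D ⊗[ℂ] D))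
    -- the modified classical Yang–Baxter equation `[[r,r]] = [θ₁₂, θ₂₃]`:
    (hMYBE : (∑ i, ∑ j,
        ((⁅ra i, ra j⁆ ⊗ₜ[ℂ] (rb i)) ⊗ₜ[ℂ] (rb j)
          + ((ra i) ⊗ₜ[ℂ] ⁅rb i, ra j⁆) ⊗ₜ[ℂ] (rb j)
          + ((ra i) ⊗ₜ[ℂ] (ra j)) ⊗ₜ[ℂ] ⁅rb i, rb j⁆))
      = ∑ i, ∑ j, ((θa i) ⊗ₜ[ℂ] ⁅θb i, θa j⁆) ⊗ₜ[ℂ] (θb j))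
    -- `θ` induces the zero bidifferential operator on `A`:
    (hθzero : ∀ a b : A, ∑ i, (ρ (θa i) a) * (ρ (θb i) b) = 0) :
    -- conclusion, for the bracket `ϖ(a,b) = Σ (η⃗^i a)(h⃗^i b)`:
    ∀ pb : A → A → A, (∀ a b : A, pb a b = ∑ i, (ρ (eb i) a) * (ρ (hb i) b)) →
      -- `ϖ = Σ η⃗^i ∧ h⃗^i` coincides with `Σ η⃗^i ⊗ h⃗^i`:
      (∀ a b : A, (2⁻¹ : ℂ) •
          (∑ i, ((ρ (eb i) a) * (ρ (hb i) b) - (ρ (hb i) a) * (ρ (eb i) b)))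
        = pb a b) ∧
      -- `ϖ` is a Poisson bracket:
      (∀ a b : A, pb a b = - pb b a) ∧
      (∀ a b c : A, pb (a * b) c = a * pb b c + b * pb a c) ∧
      (∀ a b c : A, pb a (pb b c) + pb b (pb c a) + pb c (pb a b) = 0) ∧
      -- `L` is a Poisson–Lie `D(h)`-manifold: the cocycle condition with respect to
      -- the cobracket `μ(x) = ad_x(r)` of the double:
      (∀ (x : D) (a b : A),
        ρ x (pb a b) - pb (ρ x a) b - pb a (ρ x b)
          = ∑ i, ((ρ ⁅x, ra i⁆ a) * (ρ (rb i) b) + (ρ (ra i) a) * (ρ ⁅x, rb i⁆ b))) := by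
  let := invertibleOfNonzero (two_ne_zero' ℂ)
  exact statement15_general hb eb ρ hder hlie ra rb θa θb hrdef hθdef hMYBE hθzero

end
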